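/- Let R = ⊕_{i∈G} R_i be an integral domain graded by an abelian group G such that 𝔾(R) is a free abelian group of rank r (r ∈ ℕ). Let S be the set of all nonzero homogeneous elements of R and consider the G-graded domain ℛ = S⁻¹R = ⊕_{i∈G} ℛ_i (with deg(a/s) = deg(a) − deg(s) for homogeneous a and s). Then ℛ_0 is a field containing R_0, and there exist nonzero homogeneous elements t_1, …, t_r of ℛ, algebraically independent over ℛ_0, such that ℛ = ℛ_0[t_1^{±1}, …, t_r^{±1}] is a Laurent polynomial ring in r variables over ℛ_0. -/

import Mathlib

noncomputable section

/-- A derivation is locally nilpotent. -/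
def IsLND {R : Type*} [CommRing R] (D : Derivation ℤ R R) : Prop :=
  ∀ b : R, ∃ n : ℕ, 0 < n ∧ (⇑D)^[n] b = 0

/-- Kernel of a derivation, as a subring. -/
def kerDer {R : Type*} [CommRing R] (D : Derivation ℤ R R) : Subring R where
  carrier := {x | D x = 0}
  one_mem' := by simp
  mul_mem' := by
    intro a b ha hb
    simp only [Set.mem_setOf_eq] at *
    rw [Derivation.leibniz, ha, hb]
    simp
  add_mem' := by
    intro a b ha hb
    simp only [Set.mem_setOf_eq] at *
    rw [map_add, ha, hb, add_zero]
  zero_mem' := by simp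
  neg_mem' := by
    intro a ha
    simp only [Set.mem_setOf_eq] at *
    rw [map_neg, ha, neg_zero]

section Graded

variable {G : Type*} [AddCommGroup G] {B : Type*} [CommRing B]

/-- The Veronese subring `B^{(H)} = ⊕_{i ∈ H} B_i` of a `G`-graded ring,
realized as the subring generated by the homogeneous elements whose degree lies in `H`. -/
def verSub (𝒜 : G → AddSubgroup B) (H : AddSubgroup G) : Subring B :=
  Subring.closure (⋃ i ∈ (H : Set G), (𝒜 i : Set B))

/-- 𝔾(B): the subgroup of G generated by the degrees of nonzero homogeneous elements. -/
def Gsub (𝒜 : G → AddSubgroup B) : AddSubgroup G :=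
  AddSubgroup.closure { i : G | 𝒜 i ≠ ⊥ }

/-- `H ∈ 𝕋(B)`: the quotient `𝔾(B)/(H ∩ 𝔾(B))` is torsion. -/
def Tmem (𝒜 : G → AddSubgroup B) (H : AddSubgroup G) : Prop :=
  ∀ g ∈ Gsub 𝒜, ∃ n : ℕ, 0 < n ∧ n • g ∈ H

/-- A homogeneous derivation of `B`. -/
def IsHomogDer (𝒜 : G → AddSubgroup B) (D : Derivation ℤ B B) : Prop :=
  ∃ d : G, ∀ (i : G) (x : B), x ∈ 𝒜 i → D x ∈ 𝒜 (i + d)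

/-- A homogeneous derivation of a graded subring `S` of `B`. -/
def IsHomogDerOn (𝒜 : G → AddSubgroup B) (S : Subring B) (D : Derivation ℤ S S) : Prop :=
  ∃ d : G, ∀ (i : G) (x : S), (x : B) ∈ 𝒜 i → ((D x : S) : B) ∈ 𝒜 (i + d)

/-- 𝕄̄(B,p): the subgroup of G generated by the degrees i with B_i ⊄ p. -/
def Mbar (𝒜 : G → AddSubgroup B) (p : Ideal B) : AddSubgroup G :=
  AddSubgroup.closure { i : G | ¬ (𝒜 i : Set B) ⊆ (p : Set B) }

/-- A prime ideal of height 1. -/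
def heightOne {R : Type*} [CommRing R] (p : Ideal R) : Prop :=
  p.IsPrime ∧ (∃ q : Ideal R, q.IsPrime ∧ q < p) ∧
    ∀ q r : Ideal R, q.IsPrime → r.IsPrime → q < r → r < p → False

open Classical in
/-- 𝔾̄(B). -/
def Gbar (𝒜 : G → AddSubgroup B) : AddSubgroup G :=
  if ∃ p : Ideal B, heightOne p then ⨅ p : {p : Ideal B // heightOne p}, Mbar 𝒜 p.1
  else Gsub 𝒜

end Graded

section Loc

variable {G : Type*} [AddCommGroup G] [DecidableEq G] {B : Type*} [CommRing B] [IsDomain B]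

/-- The multiplicative set of nonzero homogeneous elements of a graded domain. -/
def homogNZ (𝒜 : G → AddSubgroup B) [GradedRing 𝒜] : Submonoid B where
  carrier := { x | x ≠ 0 ∧ ∃ i, x ∈ 𝒜 i }
  one_mem' := ⟨one_ne_zero, 0, SetLike.one_mem_graded 𝒜⟩
  mul_mem' := by
    rintro a b ⟨ha0, i, hi⟩ ⟨hb0, j, hj⟩
    exact ⟨mul_ne_zero ha0 hb0, i + j, SetLike.mul_mem_graded hi hj⟩

variable (𝒜 : G → AddSubgroup B) [GradedRing 𝒜]

/-- A homogeneous element of the localization of B at its nonzero homogeneous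
elements: a fraction a/s with a homogeneous and s homogeneous nonzero. -/
def IsHomogLoc (y : Localization (homogNZ 𝒜)) : Prop :=
  ∃ a s : B, (∃ i, a ∈ 𝒜 i) ∧ (∃ j, s ∈ 𝒜 j) ∧ s ≠ 0 ∧
    y * algebraMap B (Localization (homogNZ 𝒜)) s
      = algebraMap B (Localization (homogNZ 𝒜)) a

/-- The degree-0 subring ℛ₀ of the localization ℛ = S⁻¹B: fractions a/s with a and s
homogeneous of the same degree, s ≠ 0. -/
def locDegZero : Subring (Localization (homogNZ 𝒜)) :=
  Subring.closure { y | ∃ (i : G) (a s : B), a ∈ 𝒜 i ∧ s ∈ 𝒜 i ∧ s ≠ 0 ∧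
    y * algebraMap B (Localization (homogNZ 𝒜)) s
      = algebraMap B (Localization (homogNZ 𝒜)) a }


/-- `y` is homogeneous of degree `g` in the localization. -/
def HDeg (g : G) (y : Localization (homogNZ 𝒜)) : Prop :=
  ∃ (j : G) (a s : B), a ∈ 𝒜 (g + j) ∧ s ∈ 𝒜 j ∧ s ≠ 0 ∧
    y * algebraMap B (Localization (homogNZ 𝒜)) s
      = algebraMap B (Localization (homogNZ 𝒜)) a

theorem homogNZ_le : homogNZ 𝒜 ≤ nonZeroDivisors B := by
  intro x hx
  exact mem_nonZeroDivisors_of_ne_zero hx.1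

theorem algMap_inj : Function.Injective (algebraMap B (Localization (homogNZ 𝒜))) :=
  IsLocalization.injective _ (homogNZ_le 𝒜)

theorem loc_isDomain : IsDomain (Localization (homogNZ 𝒜)) :=
  IsLocalization.isDomain_localization (homogNZ_le 𝒜)

theorem algMap_ne {s : B} (hs : s ≠ 0) :
    algebraMap B (Localization (homogNZ 𝒜)) s ≠ 0 := by
  intro h
  exact hs (algMap_inj 𝒜 (by rw [h, map_zero]))

theorem algMap_inv {s : B} {j : G} (hj : s ∈ 𝒜 j) (hs : s ≠ 0) :
    ∃ v : Localization (homogNZ 𝒜), algebraMap B (Localization (homogNZ 𝒜)) s * v = 1 :=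
  (IsLocalization.map_units (Localization (homogNZ 𝒜))
    (⟨s, hs, j, hj⟩ : homogNZ 𝒜)).exists_right_inv

theorem HDeg.mul {g h : G} {y z : Localization (homogNZ 𝒜)}
    (hy : HDeg 𝒜 g y) (hz : HDeg 𝒜 h z) : HDeg 𝒜 (g + h) (y * z) := by
  obtain ⟨j, a, s, ha, hs, hs0, e⟩ := hy
  obtain ⟨k, b, t, hb, ht, ht0, f⟩ := hz
  refine ⟨j + k, a * b, s * t, ?_, SetLike.mul_mem_graded hs ht, mul_ne_zero hs0 ht0, ?_⟩
  · have := SetLike.mul_mem_graded ha hb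
    rwa [add_add_add_comm] at this
  · rw [map_mul, map_mul, ← e, ← f]; ring

theorem HDeg.add {g : G} {y z : Localization (homogNZ 𝒜)}
    (hy : HDeg 𝒜 g y) (hz : HDeg 𝒜 g z) : HDeg 𝒜 g (y + z) := by
  obtain ⟨j, a, s, ha, hs, hs0, e⟩ := hy
  obtain ⟨k, b, t, hb, ht, ht0, f⟩ := hz
  refine ⟨j + k, a * t + b * s, s * t, ?_, SetLike.mul_mem_graded hs ht,
    mul_ne_zero hs0 ht0, ?_⟩
  · have h1 := SetLike.mul_mem_graded ha ht
    have h2 := SetLike.mul_mem_graded hb hs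
    rw [add_assoc] at h1
    rw [add_assoc, add_comm k j] at h2
    exact add_mem h1 h2
  · rw [map_mul, map_add, map_mul, map_mul, ← e, ← f]; ring

theorem HDeg.neg {g : G} {y : Localization (homogNZ 𝒜)}
    (hy : HDeg 𝒜 g y) : HDeg 𝒜 g (-y) := by
  obtain ⟨j, a, s, ha, hs, hs0, e⟩ := hy
  exact ⟨j, -a, s, neg_mem ha, hs, hs0, by rw [map_neg, ← e]; ring⟩

theorem HDeg.of_mem {g : G} {a : B} (ha : a ∈ 𝒜 g) :
    HDeg 𝒜 g (algebraMap B (Localization (homogNZ 𝒜)) a) :=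
  ⟨0, a, 1, by simpa using ha, SetLike.one_mem_graded 𝒜, one_ne_zero, by simp⟩

theorem HDeg.one : HDeg 𝒜 0 (1 : Localization (homogNZ 𝒜)) := by
  have := HDeg.of_mem 𝒜 (SetLike.one_mem_graded 𝒜)
  simpa using this

theorem HDeg.pow {g : G} {y : Localization (homogNZ 𝒜)} (hy : HDeg 𝒜 g y) (n : ℕ) :
    HDeg 𝒜 (n • g) (y ^ n) := by
  induction n with
  | zero => simpa using HDeg.one 𝒜
  | succ n ih => rw [pow_succ, succ_nsmul]; exact ih.mul 𝒜 hy

theorem HDeg.prod {ι : Type*} (F : Finset ι) (d : ι → G) (y : ι → Localization (homogNZ 𝒜))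
    (h : ∀ i, HDeg 𝒜 (d i) (y i)) : HDeg 𝒜 (∑ i ∈ F, d i) (∏ i ∈ F, y i) := by
  classical
  induction F using Finset.induction_on with
  | empty => simpa using HDeg.one 𝒜
  | insert a F ha ih =>
    rw [Finset.sum_insert ha, Finset.prod_insert ha]
    exact (h a).mul 𝒜 ih

theorem HDeg.inv {g : G} {y : Localization (homogNZ 𝒜)} (hy : HDeg 𝒜 g y) (h0 : y ≠ 0) :
    ∃ z, y * z = 1 ∧ HDeg 𝒜 (-g) z := by
  have := loc_isDomain 𝒜
  obtain ⟨j, a, s, ha, hs, hs0, e⟩ := hy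
  have ha0 : a ≠ 0 := by
    rintro rfl
    rw [map_zero] at e
    exact mul_ne_zero h0 (algMap_ne 𝒜 hs0) e
  obtain ⟨v, hv⟩ := algMap_inv 𝒜 ha ha0
  refine ⟨algebraMap B _ s * v, by rw [← mul_assoc, e, hv], g + j, s, a, ?_, ha, ha0, ?_⟩
  · simpa using hs
  · rw [mul_assoc, mul_comm v, hv, mul_one]

theorem mem_locDegZero {y : Localization (homogNZ 𝒜)} :
    y ∈ locDegZero 𝒜 ↔ HDeg 𝒜 0 y := by
  constructor
  · intro h
    unfold locDegZero at h
    induction h using Subring.closure_induction with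
    | mem x hx =>
      obtain ⟨i, a, s, ha, hs, hs0, e⟩ := hx
      exact ⟨i, a, s, by simpa using ha, hs, hs0, e⟩
    | zero => simpa using HDeg.of_mem 𝒜 (zero_mem (𝒜 0))
    | one => exact HDeg.one 𝒜
    | add x y _ _ hx hy => exact hx.add 𝒜 hy
    | neg x _ hx => exact hx.neg 𝒜
    | mul x y _ _ hx hy => simpa using hx.mul 𝒜 hy
  · rintro ⟨j, a, s, ha, hs, hs0, e⟩
    exact Subring.subset_closure ⟨j, a, s, by simpa using ha, hs, hs0, e⟩

theorem common_den {ι : Type*} (F : Finset ι) (d : ι → G) (y : ι → Localization (homogNZ 𝒜))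
    (h : ∀ i, HDeg 𝒜 (d i) (y i)) :
    ∃ (j : G) (s : B), s ∈ 𝒜 j ∧ s ≠ 0 ∧ ∀ i ∈ F, ∃ a ∈ 𝒜 (d i + j),
      y i * algebraMap B (Localization (homogNZ 𝒜)) s
        = algebraMap B (Localization (homogNZ 𝒜)) a := by
  classical
  induction F using Finset.induction_on with
  | empty => exact ⟨0, 1, SetLike.one_mem_graded 𝒜, one_ne_zero, by simp⟩
  | insert i F hi ih =>
    obtain ⟨j, s, hs, hs0, H⟩ := ih
    obtain ⟨k, b, t, hb, ht, ht0, f⟩ := h i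
    refine ⟨j + k, s * t, SetLike.mul_mem_graded hs ht, mul_ne_zero hs0 ht0, ?_⟩
    intro i' hi'
    rcases Finset.mem_insert.1 hi' with rfl | hi'
    · refine ⟨b * s, ?_, ?_⟩
      · have := SetLike.mul_mem_graded hb hs
        rwa [add_assoc, add_comm k j] at this
      · rw [map_mul, map_mul, ← f]; ring
    · obtain ⟨a, ha, e⟩ := H i' hi'
      refine ⟨a * t, ?_, ?_⟩
      · have := SetLike.mul_mem_graded ha ht
        rwa [add_assoc] at this
      · rw [map_mul, map_mul, ← e]; ring

theorem HDeg.indep {ι : Type*} (F : Finset ι) (d : ι → G) (hd : Function.Injective d)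
    (y : ι → Localization (homogNZ 𝒜)) (h : ∀ i, HDeg 𝒜 (d i) (y i))
    (hsum : ∑ i ∈ F, y i = 0) : ∀ i ∈ F, y i = 0 := by
  classical
  have := loc_isDomain 𝒜
  obtain ⟨j, s, hs, hs0, H⟩ := common_den 𝒜 F d y h
  choose! a ha e using H
  have h0 : ∑ i ∈ F, a i = 0 := by
    apply algMap_inj 𝒜
    rw [map_sum, map_zero, ← Finset.sum_congr rfl e, ← Finset.sum_mul, hsum, zero_mul]
  intro i hi
  have hai : a i = 0 := by
    have h1 := congrArg (GradedRing.proj 𝒜 (d i + j)) h0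
    rw [map_sum, map_zero, Finset.sum_eq_single i] at h1
    · rwa [GradedRing.proj_apply, DirectSum.decompose_of_mem_same _ (ha i hi)] at h1
    · intro k hk hki
      rw [GradedRing.proj_apply, DirectSum.decompose_of_mem_ne _ (ha k hk)]
      intro h2
      exact hki (hd (add_right_cancel h2))
    · intro h2; exact absurd hi h2
  have := e i hi
  rw [hai, map_zero] at this
  exact (mul_eq_zero.1 this).resolve_right (algMap_ne 𝒜 hs0)

theorem exists_HDeg_ne {g : G} (hg : g ∈ Gsub 𝒜) :
    ∃ y : Localization (homogNZ 𝒜), y ≠ 0 ∧ HDeg 𝒜 g y := by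
  have := loc_isDomain 𝒜
  unfold Gsub at hg
  induction hg using AddSubgroup.closure_induction with
  | mem x hx =>
    obtain ⟨⟨a, ha⟩, h1⟩ := AddSubgroup.ne_bot_iff_exists_ne_zero.1 hx
    have h0 : a ≠ 0 := fun h' => h1 (Subtype.ext h')
    exact ⟨_, algMap_ne 𝒜 h0, HDeg.of_mem 𝒜 ha⟩
  | zero => exact ⟨1, one_ne_zero, HDeg.one 𝒜⟩
  | add x y _ _ hx hy =>
    obtain ⟨a, ha, ha'⟩ := hx
    obtain ⟨b, hb, hb'⟩ := hy
    exact ⟨a * b, mul_ne_zero ha hb, ha'.mul 𝒜 hb'⟩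
  | neg x _ hx =>
    obtain ⟨a, ha, ha'⟩ := hx
    obtain ⟨z, hz, hz'⟩ := ha'.inv 𝒜 ha
    exact ⟨z, right_ne_zero_of_mul_eq_one hz, hz'⟩

theorem Gsub_mem {g : G} {a : B} (ha : a ∈ 𝒜 g) (h0 : a ≠ 0) : g ∈ Gsub 𝒜 := by
  apply AddSubgroup.subset_closure
  intro h
  rw [h] at ha
  exact h0 ha

theorem HDeg.mem_Gsub {g : G} {y : Localization (homogNZ 𝒜)} (hy : HDeg 𝒜 g y) (h0 : y ≠ 0) :
    g ∈ Gsub 𝒜 := by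
  have := loc_isDomain 𝒜
  obtain ⟨j, a, s, ha, hs, hs0, e⟩ := hy
  have ha0 : a ≠ 0 := by
    rintro rfl
    rw [map_zero] at e
    exact mul_ne_zero h0 (algMap_ne 𝒜 hs0) e
  simpa using sub_mem (Gsub_mem 𝒜 ha ha0) (Gsub_mem 𝒜 hs hs0)

/-- Degrees at which a subring `C` has a homogeneous unit. -/
def unitDeg (C : Subring (Localization (homogNZ 𝒜))) : AddSubgroup G where
  carrier := {g | ∃ w w', HDeg 𝒜 g w ∧ HDeg 𝒜 (-g) w' ∧ w * w' = 1 ∧ w ∈ C ∧ w' ∈ C}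
  zero_mem' := ⟨1, 1, HDeg.one 𝒜, by simpa using HDeg.one 𝒜, by simp, one_mem _, one_mem _⟩
  add_mem' := by
    rintro g h ⟨w, w', h1, h2, h3, h4, h5⟩ ⟨v, v', k1, k2, k3, k4, k5⟩
    refine ⟨w * v, w' * v', h1.mul 𝒜 k1, ?_, ?_, mul_mem h4 k4, mul_mem h5 k5⟩
    · rw [neg_add]; exact h2.mul 𝒜 k2
    · rw [mul_mul_mul_comm, h3, k3, one_mul]
  neg_mem' := by
    rintro g ⟨w, w', h1, h2, h3, h4, h5⟩
    exact ⟨w', w, h2, by simpa using h1, by rw [mul_comm, h3], h5, h4⟩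

theorem closure_top (C : Subring (Localization (homogNZ 𝒜)))
    (h0 : locDegZero 𝒜 ≤ C) (hT : Gsub 𝒜 ≤ unitDeg 𝒜 C) : C = ⊤ := by
  have key : ∀ g y, HDeg 𝒜 g y → y ∈ C := by
    intro g y hy
    by_cases hy0 : y = 0
    · rw [hy0]; exact zero_mem _
    obtain ⟨w, w', h1, h2, h3, h4, h5⟩ := hT (hy.mem_Gsub 𝒜 hy0)
    have h6 : y * w' ∈ C := h0 ((mem_locDegZero 𝒜).2 (by simpa using hy.mul 𝒜 h2))
    have h7 : y = y * w' * w := by rw [mul_assoc, mul_comm w', h3, mul_one]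
    rw [h7]
    exact mul_mem h6 h4
  have keyB : ∀ b : B, algebraMap B (Localization (homogNZ 𝒜)) b ∈ C := by
    intro b
    classical
    rw [← DirectSum.sum_support_decompose 𝒜 b, map_sum]
    exact sum_mem fun i _ => key i _ (HDeg.of_mem 𝒜 (SetLike.coe_mem _))
  rw [eq_top_iff]
  intro y _
  obtain ⟨⟨b, s⟩, hbs⟩ := IsLocalization.surj (homogNZ 𝒜) y
  obtain ⟨hs0, j, hs⟩ := s.2
  obtain ⟨v, hv, hv'⟩ := (HDeg.of_mem 𝒜 hs).inv 𝒜 (algMap_ne 𝒜 hs0)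
  have : y = algebraMap B _ b * v := by
    rw [← hbs, mul_assoc, hv, mul_one]
  rw [this]
  exact mul_mem (keyB b) (key _ _ hv')

/-- Let R be a domain graded by an abelian group G with 𝔾(R) free abelian of rank r,
let S be the set of nonzero homogeneous elements of R, and ℛ = S⁻¹R.  Then ℛ₀ is a
field containing R₀, and ℛ = ℛ₀[t₁^{±1}, …, t_r^{±1}] is a Laurent polynomial ring over
ℛ₀ on nonzero homogeneous elements t₁, …, t_r that are algebraically independent
over ℛ₀. -/
theorem localization_at_homogeneous_is_laurent
    (r : ℕ) (hfree : Nonempty ((Gsub 𝒜) ≃+ (Fin r → ℤ))) :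
    ((∀ y ∈ locDegZero 𝒜, y ≠ 0 → ∃ z ∈ locDegZero 𝒜, y * z = 1) ∧
      (algebraMap B (Localization (homogNZ 𝒜))) '' (𝒜 0) ⊆ locDegZero 𝒜) ∧
    ∃ t : Fin r → Localization (homogNZ 𝒜),
      (∀ j, t j ≠ 0 ∧ IsHomogLoc 𝒜 (t j)) ∧
      (∀ p : MvPolynomial (Fin r) (locDegZero 𝒜),
        MvPolynomial.eval₂ (locDegZero 𝒜).subtype t p = 0 → p = 0) ∧
      ∃ u : Fin r → Localization (homogNZ 𝒜), (∀ j, t j * u j = 1) ∧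
        Subring.closure
          ((locDegZero 𝒜 : Set (Localization (homogNZ 𝒜)))
            ∪ Set.range t ∪ Set.range u) = ⊤ := by
  have := loc_isDomain 𝒜
  refine ⟨⟨?_, ?_⟩, ?_⟩
  · intro y hy hy0
    obtain ⟨z, hz, hz'⟩ := ((mem_locDegZero 𝒜).1 hy).inv 𝒜 hy0
    exact ⟨z, (mem_locDegZero 𝒜).2 (by simpa using hz'), hz⟩
  · rintro _ ⟨a, ha, rfl⟩
    exact (mem_locDegZero 𝒜).2 (HDeg.of_mem 𝒜 ha)
  obtain ⟨e⟩ := hfree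
  let g : Fin r → Gsub 𝒜 := fun j => e.symm (Pi.single j 1)
  have hcomb : ∀ m : Fin r → ℤ, ∑ j, m j • g j = e.symm m := by
    intro m
    have h1 : ∀ j, m j • g j = e.symm (m j • Pi.single j 1) := fun j => (map_zsmul e.symm _ _).symm
    rw [Finset.sum_congr rfl fun j _ => h1 j, ← map_sum]
    congr 1
    ext k
    simp [Finset.sum_apply, Pi.single_apply]
  choose t ht0 ht using fun j => exists_HDeg_ne 𝒜 (g j).2
  choose u hu hu' using fun j => (ht j).inv 𝒜 (ht0 j)
  refine ⟨t, ?_, ?_, u, hu, ?_⟩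
  · intro j
    refine ⟨ht0 j, ?_⟩
    obtain ⟨k, a, s, ha, hs, hs0, f⟩ := ht j
    exact ⟨a, s, ⟨_, ha⟩, ⟨_, hs⟩, hs0, f⟩
  · intro p hp
    rw [MvPolynomial.eval₂_eq'] at hp
    let d : (Fin r →₀ ℕ) → G := fun m => ∑ j, m j • (g j : G)
    have hd : Function.Injective d := by
      intro m m' h
      have h1 : ∀ m : Fin r →₀ ℕ, d m = ((e.symm fun j => (m j : ℤ) : Gsub 𝒜) : G) := by
        intro m
        rw [← hcomb]
        simp [d]
      rw [h1, h1] at h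
      have h2 := e.symm.injective (Subtype.ext h)
      ext j
      exact_mod_cast congrFun h2 j
    have hind := HDeg.indep 𝒜 p.support d hd
      (fun m => (locDegZero 𝒜).subtype (p.coeff m) * ∏ j, t j ^ m j) (by
        intro m
        have h1 : HDeg 𝒜 0 ((locDegZero 𝒜).subtype (p.coeff m)) :=
          (mem_locDegZero 𝒜).1 (p.coeff m).2
        have h2 := HDeg.prod 𝒜 Finset.univ (fun j => m j • (g j : G)) (fun j => t j ^ m j)
          (fun j => (ht j).pow 𝒜 (m j))
        simpa [d] using h1.mul 𝒜 h2) hp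
    ext m
    by_cases hm : m ∈ p.support
    · have h1 := (mul_eq_zero.1 (hind m hm)).resolve_right
        (Finset.prod_ne_zero_iff.2 fun j _ => pow_ne_zero _ (ht0 j))
      simpa using h1
    · simpa using hm
  · apply closure_top
    · intro y hy
      exact Subring.subset_closure (Or.inl (Or.inl hy))
    · intro x hx
      have h1 : x = ∑ j, (e ⟨x, hx⟩ j) • (g j : G) := by
        have h2 := congrArg (Subtype.val) (hcomb (e ⟨x, hx⟩))
        simp only [AddEquiv.symm_apply_apply] at h2
        refine h2.symm.trans ?_
        simp
      rw [h1]
      refine sum_mem fun j _ => zsmul_mem ?_ _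
      exact ⟨t j, u j, ht j, hu' j, hu j,
        Subring.subset_closure (Or.inl (Or.inr ⟨j, rfl⟩)),
        Subring.subset_closure (Or.inr ⟨j, rfl⟩)⟩


end Loc
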